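/- arXiv:2107.07622 — 2 statements merged into one kernel-verified Lean document; each statement's English description precedes it below -/
import Mathlib

section
/- Let A ∈ ℂ^{n×n} be a Hermitian positive-definite matrix. Then Tr(A⁻¹) ≥ Σ_{i=1}^{n} (A_{ii})⁻¹, where each diagonal entry A_{ii} is a positive real number. Moreover, equality holds if and only if A is a diagonal matrix. -/
open Matrix ComplexOrder

/-- The residual vector `e_i - (A i i)⁻¹ A e_i`. -/
noncomputable def residVec {n : ℕ} (A : Matrix (Fin n) (Fin n) ℂ) (i : Fin n) : Fin n → ℂ :=
  fun j => (1 : Matrix (Fin n) (Fin n) ℂ) j i - (A i i)⁻¹ * A j i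

lemma residVec_form {n : ℕ} (A : Matrix (Fin n) (Fin n) ℂ) (hA : A.PosDef) (i : Fin n) :
    star (residVec A i) ⬝ᵥ (A⁻¹ *ᵥ residVec A i) = A⁻¹ i i - (A i i)⁻¹ := by
  have hne : A i i ≠ 0 := hA.diag_pos.ne'
  have hdet : IsUnit A.det := (Matrix.isUnit_iff_isUnit_det A).1 hA.isUnit
  have hs : ∀ j k, star (A j k) = A k j := fun j k => hA.isHermitian.apply k j
  have hAv : A⁻¹ *ᵥ residVec A i
      = fun j => A⁻¹ j i - (A i i)⁻¹ * (1 : Matrix (Fin n) (Fin n) ℂ) j i := by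
    ext j
    have h1 : (A⁻¹ * A) j i = (1 : Matrix (Fin n) (Fin n) ℂ) j i := by
      rw [Matrix.nonsing_inv_mul A hdet]
    have h2 : (A⁻¹ * (1 : Matrix (Fin n) (Fin n) ℂ)) j i = A⁻¹ j i := by rw [Matrix.mul_one]
    rw [← h1, ← h2, Matrix.mul_apply, Matrix.mul_apply, Finset.mul_sum, ← Finset.sum_sub_distrib]
    simp only [Matrix.mulVec, dotProduct, residVec]
    exact Finset.sum_congr rfl fun k _ => by ring
  have hst : star (residVec A i)
      = fun j => (1 : Matrix (Fin n) (Fin n) ℂ) i j - (A i i)⁻¹ * A i j := by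
    ext j
    simp only [residVec, Pi.star_apply, star_sub, star_mul', star_inv₀, hs]
    congr 1
    by_cases h : i = j
    · subst h; simp
    · simp [Matrix.one_apply, h, Ne.symm h]
  rw [hAv, hst]
  have h3 : (A * A⁻¹) i i = 1 := by
    rw [Matrix.mul_nonsing_inv A hdet]; simp
  have h4 : ((1 : Matrix (Fin n) (Fin n) ℂ) * A⁻¹) i i = A⁻¹ i i := by rw [Matrix.one_mul]
  have h5 : (A * (1 : Matrix (Fin n) (Fin n) ℂ)) i i = A i i := by rw [Matrix.mul_one]
  have h6 : ((1 : Matrix (Fin n) (Fin n) ℂ) * (1 : Matrix (Fin n) (Fin n) ℂ)) i i = 1 := by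
    rw [Matrix.mul_one]; simp
  rw [Matrix.mul_apply] at h3 h4 h5 h6
  have : ∀ c : ℂ, (fun j => (1 : Matrix (Fin n) (Fin n) ℂ) i j - c * A i j) ⬝ᵥ
      (fun j => A⁻¹ j i - c * (1 : Matrix (Fin n) (Fin n) ℂ) j i)
      = A⁻¹ i i - c * 1 - c * 1 + c * c * A i i := by
    intro c
    rw [← h4, ← h5]
    nth_rewrite 1 [← h6]
    rw [← h3]
    simp only [dotProduct, Finset.mul_sum, ← Finset.sum_sub_distrib, ← Finset.sum_add_distrib]
    exact Finset.sum_congr rfl fun k _ => by ring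
  rw [this]
  field_simp
  ring

/-- **Inequality (diag_fact).**  For a Hermitian positive-definite `A ∈ ℂ^{n×n}`, the
diagonal entries are positive reals, `Tr(A⁻¹) ≥ Σᵢ (Aᵢᵢ)⁻¹`, and equality holds if and
only if `A` is diagonal. -/
theorem trace_inv_ge_sum_inv_diag {n : ℕ}
    (A : Matrix (Fin n) (Fin n) ℂ) (hA : A.PosDef) :
    (∀ i, (A i i).im = 0 ∧ 0 < (A i i).re) ∧
    (∑ i, ((A i i).re)⁻¹ ≤ (A⁻¹).trace.re) ∧
    ((A⁻¹).trace.re = ∑ i, ((A i i).re)⁻¹ ↔ A.IsDiag) := by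
  have hd : ∀ i, (A i i).im = 0 ∧ 0 < (A i i).re := fun i => by
    have h := Complex.lt_def.1 (hA.diag_pos (i := i))
    exact ⟨by simpa using h.2.symm, by simpa using h.1⟩
  have hinv : ∀ i, ((A i i)⁻¹).re = ((A i i).re)⁻¹ := fun i => by
    have h : A i i = ((A i i).re : ℂ) := Complex.ext (by simp) (by simp [(hd i).1])
    rw [h, ← Complex.ofReal_inv]; simp
  have htr : (A⁻¹).trace.re = ∑ i, (A⁻¹ i i).re := by
    simp [Matrix.trace]
  have hle : ∀ i, ((A i i).re)⁻¹ ≤ (A⁻¹ i i).re := fun i => by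
    have h := hA.inv.posSemidef.dotProduct_mulVec_nonneg (residVec A i)
    rw [residVec_form A hA] at h
    have h := (Complex.le_def.1 h).1
    rw [Complex.sub_re, hinv] at h
    simpa using h
  have heq : ∀ i, ((A i i).re)⁻¹ = (A⁻¹ i i).re ↔ residVec A i = 0 := fun i => by
    have hf := residVec_form A hA i
    constructor
    · intro h
      by_contra hne
      have h' := hA.inv.dotProduct_mulVec_pos hne
      rw [hf] at h'
      have h' := (Complex.lt_def.1 h').1
      rw [Complex.sub_re, hinv, h] at h'
      simp at h'
    · intro h
      rw [h] at hf
      have h' := congrArg Complex.re hf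
      rw [Complex.sub_re, hinv] at h'
      simp at h'
      linarith
  refine ⟨hd, ?_, ?_⟩
  · rw [htr]
    exact Finset.sum_le_sum fun i _ => hle i
  · rw [htr, eq_comm, Finset.sum_eq_sum_iff_of_le fun i _ => hle i]
    constructor
    · intro h j i hji
      have h := congrFun ((heq i).1 (h i (Finset.mem_univ i))) j
      have hne : A i i ≠ 0 := hA.diag_pos.ne'
      simpa [residVec, Matrix.one_apply, hji, hne] using h
    · intro h i _
      rw [heq]
      ext j
      have hne : A i i ≠ 0 := hA.diag_pos.ne'
      by_cases hji : j = i
      · subst hji; simp [residVec, hne]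
      · simp [residVec, Matrix.one_apply, hji, h hji]
end

section
/- Let Λ ∈ ℂ^{n×n} be a diagonal matrix with positive real diagonal entries λ_1,…,λ_n, and let G ∈ ℂ^{n×n} be a Hermitian positive-semidefinite matrix. Then Λ⁻¹ + G is Hermitian positive definite and Tr((Λ⁻¹ + G)⁻¹) ≥ Σ_{i=1}^{n} (λ_i⁻¹ + G_{ii})⁻¹, where each G_{ii} is a nonnegative real. Equality holds if and only if G is a diagonal matrix. -/
open Matrix ComplexOrder


theorem trace_aux {n : ℕ} (M : Matrix (Fin n) (Fin n) ℂ) (hM : M.PosDef) (d : Fin n → ℝ)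
    (hd : ∀ i, 0 < d i) (hMd : ∀ i, M i i = (d i : ℂ)) :
    (∑ i, (d i)⁻¹ ≤ (M⁻¹).trace.re) ∧
    ((M⁻¹).trace.re = ∑ i, (d i)⁻¹ ↔ M.IsDiag) := by
  have hu : IsUnit M.det := (Matrix.isUnit_iff_isUnit_det M).mp hM.isUnit
  set D : Matrix (Fin n) (Fin n) ℂ := Matrix.diagonal fun i => (((d i)⁻¹ : ℝ) : ℂ) with hD
  have hDH : Dᴴ = D := by
    rw [hD, Matrix.diagonal_conjTranspose]
    congr 1
    funext i
    simp
  have hBH : (M⁻¹)ᴴ = M⁻¹ := hM.inv.1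
  have hW : (M⁻¹ - D)ᴴ * M * (M⁻¹ - D) = M⁻¹ - D - D + D * M * D := by
    rw [Matrix.conjTranspose_sub, hDH, hBH, Matrix.sub_mul, Matrix.nonsing_inv_mul _ hu,
      Matrix.sub_mul, Matrix.one_mul, Matrix.mul_sub (D * M), Matrix.mul_assoc D M M⁻¹,
      Matrix.mul_nonsing_inv _ hu, Matrix.mul_one]
    abel
  have hps : ((M⁻¹ - D)ᴴ * M * (M⁻¹ - D)).PosSemidef :=
    hM.posSemidef.conjTranspose_mul_mul_same _
  have hdiag : ∀ i, ((M⁻¹ - D)ᴴ * M * (M⁻¹ - D)) i i = M⁻¹ i i - (((d i)⁻¹ : ℝ) : ℂ) := by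
    intro i
    have h0 : (d i : ℂ) ≠ 0 := by exact_mod_cast (hd i).ne'
    rw [hW]
    simp only [hD, Matrix.add_apply, Matrix.sub_apply, Matrix.diagonal_apply_eq,
      Matrix.mul_diagonal, Matrix.diagonal_mul, hMd]
    push_cast
    field_simp
    ring
  have htr : ((M⁻¹ - D)ᴴ * M * (M⁻¹ - D)).trace = (M⁻¹).trace - ((∑ i, (d i)⁻¹ : ℝ) : ℂ) := by
    simp only [Matrix.trace, Matrix.diag_apply, hdiag, Finset.sum_sub_distrib]
    push_cast
    rfl
  have hnn := hps.trace_nonneg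
  have hnn' := hnn
  rw [htr, Complex.le_def] at hnn'
  simp only [Complex.sub_re, Complex.ofReal_re, Complex.zero_re, Complex.sub_im,
    Complex.ofReal_im, Complex.zero_im] at hnn'
  refine ⟨by linarith [hnn'.1], ?_, ?_⟩
  · intro h
    have h0 : ((M⁻¹ - D)ᴴ * M * (M⁻¹ - D)).trace = 0 := by
      rw [htr]
      apply Complex.ext
      · simp [h]
      · simpa using hnn'.2.symm
    have hz := hps.trace_eq_zero_iff.mp h0
    have hWz : M⁻¹ = D := by
      rw [← sub_eq_zero]
      ext i j
      by_contra hne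
      have hv : (M⁻¹ - D).col j ≠ 0 := fun hc => hne (congrFun hc i)
      have hp := hM.dotProduct_mulVec_pos hv
      have he : star ((M⁻¹ - D).col j) ⬝ᵥ (M *ᵥ (M⁻¹ - D).col j)
          = ((M⁻¹ - D)ᴴ * M * (M⁻¹ - D)) j j := by
        rw [Matrix.mul_assoc]
        rfl
      rw [he, hz] at hp
      simp at hp
    have : M = Matrix.diagonal fun i => (d i : ℂ) := by
      have h1 := Matrix.mul_nonsing_inv M hu
      rw [hWz] at h1
      have h2 : D * (Matrix.diagonal fun i => (d i : ℂ)) = 1 := by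
        rw [hD, Matrix.diagonal_mul_diagonal, ← Matrix.diagonal_one]
        congr 1
        funext i
        rw [← Complex.ofReal_mul, inv_mul_cancel₀ (hd i).ne', Complex.ofReal_one]
      exact left_inv_eq_right_inv h1 h2
    rw [this]
    exact Matrix.isDiag_diagonal _
  · intro h
    have hMe : M = Matrix.diagonal fun i => (d i : ℂ) := by
      rw [← h.diagonal_diag]
      congr 1
      funext i
      exact hMd i
    have : M⁻¹ = D := by
      apply Matrix.inv_eq_right_inv
      rw [hMe, hD, Matrix.diagonal_mul_diagonal, ← Matrix.diagonal_one]
      congr 1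
      funext i
      rw [← Complex.ofReal_mul, mul_inv_cancel₀ (hd i).ne', Complex.ofReal_one]
    rw [this, hD, Matrix.trace_diagonal, ← Complex.ofReal_sum, Complex.ofReal_re]

/-- **Lower bound (eq. (J_MMSE_FD_opt_lowerbound)).**  For a diagonal `Λ` with positive
real diagonal entries `λᵢ` and a Hermitian positive-semidefinite `G`, the matrix
`Λ⁻¹ + G` is Hermitian positive definite, its diagonal data satisfy
`Tr((Λ⁻¹+G)⁻¹) ≥ Σᵢ (λᵢ⁻¹ + Gᵢᵢ)⁻¹` (each `Gᵢᵢ` a nonnegative real), and equality holds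
if and only if `G` is diagonal. -/
theorem trace_inv_lower_bound {n : ℕ} (lam : Fin n → ℝ) (hlam : ∀ i, 0 < lam i)
    (G : Matrix (Fin n) (Fin n) ℂ) (hG : G.PosSemidef) :
    ((Matrix.diagonal fun i => (lam i : ℂ))⁻¹ + G).PosDef ∧
    (∀ i, (G i i).im = 0 ∧ 0 ≤ (G i i).re) ∧
    (∑ i, ((lam i)⁻¹ + (G i i).re)⁻¹ ≤
      (((Matrix.diagonal fun i => (lam i : ℂ))⁻¹ + G)⁻¹).trace.re) ∧
    ((((Matrix.diagonal fun i => (lam i : ℂ))⁻¹ + G)⁻¹).trace.re =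
        ∑ i, ((lam i)⁻¹ + (G i i).re)⁻¹ ↔ G.IsDiag) := by
  have hD : (Matrix.diagonal fun i => (lam i : ℂ))⁻¹ =
      Matrix.diagonal fun i => (((lam i)⁻¹ : ℝ) : ℂ) := by
    apply Matrix.inv_eq_right_inv
    rw [Matrix.diagonal_mul_diagonal, ← Matrix.diagonal_one]
    congr 1
    funext i
    have := (hlam i).ne'
    rw [← Complex.ofReal_mul, mul_inv_cancel₀ this, Complex.ofReal_one]
  have hDp : (Matrix.diagonal fun i => (((lam i)⁻¹ : ℝ) : ℂ)).PosDef := by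
    apply Matrix.PosDef.diagonal
    intro i
    have := inv_pos.mpr (hlam i)
    exact_mod_cast this
  have hM := hDp.add_posSemidef hG
  rw [hD]
  have hGd : ∀ i, (G i i).im = 0 ∧ 0 ≤ (G i i).re := by
    intro i
    have := hG.diag_nonneg (i := i)
    rw [Complex.le_def] at this
    exact ⟨this.2.symm, this.1⟩
  have hd : ∀ i, 0 < (lam i)⁻¹ + (G i i).re := fun i =>
    add_pos_of_pos_of_nonneg (inv_pos.mpr (hlam i)) (hGd i).2
  have hMd : ∀ i, ((Matrix.diagonal fun i => (((lam i)⁻¹ : ℝ) : ℂ)) + G) i i =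
      (((lam i)⁻¹ + (G i i).re : ℝ) : ℂ) := by
    intro i
    rw [Matrix.add_apply, Matrix.diagonal_apply_eq]
    apply Complex.ext <;> simp [(hGd i).1]
  have key := trace_aux _ hM _ hd hMd
  refine ⟨hM, hGd, key.1, key.2.trans ?_⟩
  constructor
  · intro h i j hij
    have := h hij
    simpa [hij] using this
  · intro h i j hij
    have := h hij
    simpa [hij] using this
end
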